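/- Let G be drawn from a distribution in NSSBM(n,p,p̄,q). There is a universal constant C > 0 such that if n(p−q) ≥ C·(√(n·p̄·log(n/δ)) + log(n/δ)), then for any δ ≥ n^{−10}, with probability at least 1 − δ, λ3(L) − λ2(L★) ≥ n(p−q)/4, where L is the unnormalized Laplacian of G and L★ = E[L]. -/

import Mathlib

open Matrix MeasureTheory
open scoped BigOperators ENNReal Classical

noncomputable section

instance measSG {n : ℕ} : MeasurableSpace (SimpleGraph (Fin n)) := ⊤

variable {n : ℕ}

/-- Adjacency matrix of a graph, over `ℝ`. -/
def adjM (G : SimpleGraph (Fin n)) : Matrix (Fin n) (Fin n) ℝ :=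
  Matrix.of fun v w => if G.Adj v w then 1 else 0

/-- Laplacian of a weighted adjacency matrix. -/
def wlap (W : Matrix (Fin n) (Fin n) ℝ) : Matrix (Fin n) (Fin n) ℝ :=
  Matrix.diagonal (fun v => ∑ w, W v w) - W

/-- Unnormalized Laplacian of a graph. -/
def lap (G : SimpleGraph (Fin n)) : Matrix (Fin n) (Fin n) ℝ := wlap (adjM G)

/-- `eig M k` is the `(k+1)`-st smallest eigenvalue (root of the characteristic
polynomial, with multiplicity) of `M`; e.g. `eig M 1 = λ₂`. -/
def eig (M : Matrix (Fin n) (Fin n) ℝ) (k : ℕ) : ℝ :=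
  (M.charpoly.roots.sort (· ≤ ·)).getD k 0

def IsUnitEigenvector (M : Matrix (Fin n) (Fin n) ℝ) (t : ℝ) (u : Fin n → ℝ) : Prop :=
  M.mulVec u = t • u ∧ ∑ v, (u v) ^ 2 = 1

/-- Membership in the first community `P₁ = {1, …, n/2}`. -/
def inP1 (n : ℕ) (v : Fin n) : Prop := (v : ℕ) < n / 2

/-- `v` and `w` are in the same community. -/
def sameSide (n : ℕ) (v w : Fin n) : Prop := inP1 n v ↔ inP1 n w

/-- Number of neighbours of `v` in its own community. -/
def din (G : SimpleGraph (Fin n)) (v : Fin n) : ℕ :=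
  Nat.card {w : Fin n // G.Adj v w ∧ sameSide n v w}

/-- Number of neighbours of `v` in the other community. -/
def dout (G : SimpleGraph (Fin n)) (v : Fin n) : ℕ :=
  Nat.card {w : Fin n // G.Adj v w ∧ ¬ sameSide n v w}

/-- Degree of `v`. -/
def deg (G : SimpleGraph (Fin n)) (v : Fin n) : ℕ :=
  Nat.card {w : Fin n // G.Adj v w}

/-- `μ` samples each pair `(v,w)`, `v < w`, as an edge independently with probability `P v w`. -/
def IsEdgeProduct (P : Fin n → Fin n → ℝ) (μ : PMF (SimpleGraph (Fin n))) : Prop :=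
  ∀ G : SimpleGraph (Fin n),
    μ G = ∏ e ∈ Finset.univ.filter (fun e : Fin n × Fin n => e.1 < e.2),
      (if G.Adj e.1 e.2 then ENNReal.ofReal (P e.1 e.2) else ENNReal.ofReal (1 - P e.1 e.2))

/-- The edge-probability matrix of a member of the `NSSBM(n,p,p̄,q)` family. -/
def NSSBMprob (n : ℕ) (p pbar q : ℝ) (P : Fin n → Fin n → ℝ) : Prop :=
  (∀ v w, P v w = P w v) ∧
  (∀ v w : Fin n, v ≠ w → sameSide n v w → p ≤ P v w ∧ P v w ≤ pbar) ∧
  (∀ v w : Fin n, ¬ sameSide n v w → P v w = q)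

/-- The ideal second eigenvector `u₂⋆`. -/
def u2star (n : ℕ) : Fin n → ℝ :=
  fun v => if inP1 n v then 1 / Real.sqrt n else -(1 / Real.sqrt n)

/-- Spectral bisection with matrix `M` recovers the planted partition of `G`. -/
def BisectCorrect (n : ℕ) (M : Matrix (Fin n) (Fin n) ℝ) : Prop :=
  ∀ u : Fin n → ℝ, IsUnitEigenvector M (eig M 1) u →
    ({v : Fin n | u v < 0} = {v : Fin n | inP1 n v} ∨
     {v : Fin n | u v < 0} = {v : Fin n | ¬ inP1 n v})

/-- Off-diagonal part of the probability matrix: the expected adjacency matrix. -/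
def offP (P : Fin n → Fin n → ℝ) : Matrix (Fin n) (Fin n) ℝ :=
  Matrix.of fun v w => if v = w then 0 else P v w

/-- Expected unnormalized Laplacian. -/
def expLap (P : Fin n → Fin n → ℝ) : Matrix (Fin n) (Fin n) ℝ := wlap (offP P)

/-- Euclidean norm. -/
def l2 (x : Fin n → ℝ) : ℝ := Real.sqrt (∑ v, (x v) ^ 2)

/-- Inner product. -/
def dotp (x y : Fin n → ℝ) : ℝ := ∑ v, x v * y v

/-- Entrywise max (ℓ∞) norm. -/
def linf (x : Fin n → ℝ) : ℝ := ⨆ v, |x v|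

/-- ℓ2 → ℓ2 operator norm of a matrix. -/
def opNorm (M : Matrix (Fin n) (Fin n) ℝ) : ℝ :=
  ‖LinearMap.toContinuousLinearMap (Matrix.toEuclideanLin M)‖

/-- The crossing edges of `μ` are independent `Bernoulli(q)`, while the internal
edges are arbitrary (possibly depending on the crossing edges). -/
def CrossingProduct (n : ℕ) (q : ℝ) (μ : PMF (SimpleGraph (Fin n))) : Prop :=
  ∃ (ν : PMF (SimpleGraph (Fin n))) (κ : SimpleGraph (Fin n) → PMF (SimpleGraph (Fin n))),
    IsEdgeProduct (fun v w => if sameSide n v w then 0 else q) ν ∧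
    (∀ H, ∀ G ∈ (κ H).support, ∀ v w, ¬ sameSide n v w → ((G.Adj v w) ↔ H.Adj v w)) ∧
    μ = ν.bind κ

/-! Write `L - L⋆` as a sum `S` of centered, independent multiples of the positive semidefinite
single-edge Laplacians `X e`, which satisfy `X e * X e = 2 • X e`. To bound the lower tail of `S`,
differentiate `m t = E tr exp (-t S)`. In `-m' t = E tr (S exp (-t S))`, averaging over the state of
the edge `e` alone leaves only differences `tr (X e (exp (-t A) - exp (-t (A + X e))))`. By a mean
value inequality under the trace each of them is at most `4 t tr (X e exp (-t A))`, and summing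
over `e` with weights `p e` brings back `L⋆ ≤ n p̄`. Hence `m' ≤ 4 t n p̄ m`, so that
`m t ≤ n exp (2 n p̄ t ^ 2)`, and Markov's inequality gives `S ≥ -s` for `s = n (p - q) / 4` outside
an event of probability at most `δ`.

By the Courant–Fischer principle it remains to test quadratic forms. On the orthogonal complement
of `1` and the community sign vector, `L⋆` is at least `n (p + q) / 2`, hence
`λ₃(L) ≥ n (p + q) / 2 - s`; on the span of these two vectors `L⋆` only sees the crossing pairs and
is at most `n q`, hence `λ₂(L⋆) ≤ n q`. The two bounds differ by `n (p - q) / 2 - s = s`. -/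

open scoped MatrixOrder

section TraceInequalities

variable {ι : Type*} [Fintype ι] [DecidableEq ι] {A B : Matrix ι ι ℝ}

/-- The squared inner product of the `i`-th eigenvector of `A` with the `j`-th eigenvector of
`B`: the weights of the double spectral sums representing `tr (f(A) g(B))`. -/
def eigenOverlap (hA : A.IsHermitian) (hB : B.IsHermitian) (i j : ι) : ℝ :=
  (star (hA.eigenvectorUnitary : Matrix ι ι ℝ) * hB.eigenvectorUnitary) i j ^ 2

theorem trace_cfc_mul_cfc (hA : A.IsHermitian) (hB : B.IsHermitian) (f g : ℝ → ℝ) :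
    (cfc f A * cfc g B).trace = ∑ i, ∑ j, eigenOverlap hA hB i j *
      (f (hA.eigenvalues i) * g (hB.eigenvalues j)) := by
  set W : Matrix ι ι ℝ := star (hA.eigenvectorUnitary : Matrix ι ι ℝ) * hB.eigenvectorUnitary
    with hW
  have hcyclic : (cfc f A * cfc g B).trace =
      (diagonal (f ∘ hA.eigenvalues) * (W * diagonal (g ∘ hB.eigenvalues) * Wᵀ)).trace := by
    have hWt : Wᵀ = star (hB.eigenvectorUnitary : Matrix ι ι ℝ) * hA.eigenvectorUnitary := by
      simp [hW, star_eq_conjTranspose, transpose_mul]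
    rw [hA.cfc_eq, hB.cfc_eq, IsHermitian.cfc, IsHermitian.cfc,
      Unitary.conjStarAlgAut_apply, Unitary.conjStarAlgAut_apply, hWt, hW]
    simp only [mul_assoc]
    rw [trace_mul_comm]
    simp only [mul_assoc]
    rfl
  rw [hcyclic, trace]
  refine Finset.sum_congr rfl fun i _ => ?_
  rw [diag_apply, diagonal_mul, mul_apply, Finset.mul_sum]
  refine Finset.sum_congr rfl fun j _ => ?_
  simp only [mul_diagonal, transpose_apply, eigenOverlap, Function.comp_apply, ← hW]
  ring

theorem self_mul_cfc (hA : A.IsHermitian) (f : ℝ → ℝ) :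
    A * cfc f A = cfc (fun x => x * f x) A := by
  rw [cfc_mul (fun x => x) f A (hg := A.finite_real_spectrum.continuousOn f),
    cfc_id' ℝ A hA.isSelfAdjoint]

theorem trace_cfc (hA : A.IsHermitian) (f : ℝ → ℝ) :
    (cfc f A).trace = ∑ i, f (hA.eigenvalues i) := by
  rw [hA.cfc_eq, IsHermitian.cfc, Unitary.conjStarAlgAut_apply, trace_mul_cycle]
  simp [trace_diagonal]

theorem trace_sub_mul_cfc_sub (hA : A.IsHermitian) (hB : B.IsHermitian) (f : ℝ → ℝ) :
    ((A - B) * (cfc f B - cfc f A)).trace = ∑ i, ∑ j, eigenOverlap hA hB i j *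
      ((hA.eigenvalues i - hB.eigenvalues j) *
        (f (hB.eigenvalues j) - f (hA.eigenvalues i))) := by
  have hAA := trace_cfc_mul_cfc hA hB (fun x => x * f x) fun _ => 1
  have hAB := trace_cfc_mul_cfc hA hB (fun x => x) f
  have hBA := trace_cfc_mul_cfc hA hB f fun x => x
  have hBB := trace_cfc_mul_cfc hA hB (fun _ => 1) fun x => x * f x
  simp only [cfc_id' ℝ A hA.isSelfAdjoint, cfc_id' ℝ B hB.isSelfAdjoint,
    cfc_const_one ℝ A hA.isSelfAdjoint, cfc_const_one ℝ B hB.isSelfAdjoint,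
    ← self_mul_cfc hA, ← self_mul_cfc hB, mul_one, one_mul] at hAA hAB hBA hBB
  rw [sub_mul, mul_sub, mul_sub, trace_sub, trace_sub, trace_sub, trace_mul_comm B (cfc f A),
    hAA, hAB, hBA, hBB]
  simp only [← Finset.sum_sub_distrib]
  exact Finset.sum_congr rfl fun i _ => Finset.sum_congr rfl fun j _ => by ring

theorem trace_sub_sq_mul_cfc (hA : A.IsHermitian) (hB : B.IsHermitian) (f : ℝ → ℝ) :
    ((A - B) ^ 2 * cfc f A).trace = ∑ i, ∑ j, eigenOverlap hA hB i j *
      ((hA.eigenvalues i - hB.eigenvalues j) ^ 2 * f (hA.eigenvalues i)) := by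
  have hAA := trace_cfc_mul_cfc hA hB (fun x => x * (x * f x)) fun _ => 1
  have hAB := trace_cfc_mul_cfc hA hB (fun x => x * f x) fun x => x
  have hBB := trace_cfc_mul_cfc hA hB f fun x => x * x
  simp only [cfc_id' ℝ B hB.isSelfAdjoint, cfc_const_one ℝ B hB.isSelfAdjoint,
    ← self_mul_cfc hA, ← self_mul_cfc hB, mul_one] at hAA hAB hBB
  have hexpand : ((A - B) ^ 2 * cfc f A).trace = (A * (A * cfc f A)).trace -
      2 * (A * cfc f A * B).trace + (cfc f A * (B * B)).trace := by
    have hcomm : cfc f A * A = A * cfc f A := (hA.isSelfAdjoint.commute_cfc (Commute.refl A) f).eq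
    have hABf : (A * B * cfc f A).trace = (A * cfc f A * B).trace := by
      rw [trace_mul_cycle, hcomm]
    have hBAf : (B * A * cfc f A).trace = (A * cfc f A * B).trace := by
      rw [mul_assoc, trace_mul_comm]
    have hBBf : (B * B * cfc f A).trace = (cfc f A * (B * B)).trace := trace_mul_comm _ _
    rw [sq, sub_mul, mul_sub, mul_sub, sub_mul, sub_mul, sub_mul, trace_sub, trace_sub, trace_sub,
      hABf, hBAf, hBBf, mul_assoc A A]
    ring
  rw [hexpand, hAA, hAB, hBB, Finset.mul_sum]
  simp only [Finset.mul_sum, ← Finset.sum_sub_distrib, ← Finset.sum_add_distrib]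
  exact Finset.sum_congr rfl fun i _ => Finset.sum_congr rfl fun j _ => by ring

theorem eigenOverlap_nonneg (hA : A.IsHermitian) (hB : B.IsHermitian) (i j : ι) :
    0 ≤ eigenOverlap hA hB i j :=
  sq_nonneg _

theorem eigenOverlap_comm (hA : A.IsHermitian) (hB : B.IsHermitian) (i j : ι) :
    eigenOverlap hA hB i j = eigenOverlap hB hA j i := by
  simp [eigenOverlap, star_eq_conjTranspose, mul_apply, mul_comm]

theorem trace_sub_mul_cfc_sub_nonneg (hA : A.IsHermitian) (hB : B.IsHermitian) {f : ℝ → ℝ}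
    (hf : Antitone f) : 0 ≤ ((A - B) * (cfc f B - cfc f A)).trace := by
  rw [trace_sub_mul_cfc_sub hA hB]
  refine Finset.sum_nonneg fun i _ => Finset.sum_nonneg fun j _ =>
    mul_nonneg (eigenOverlap_nonneg hA hB i j) ?_
  rcases le_total (hA.eigenvalues i) (hB.eigenvalues j) with h | h
  · exact mul_nonneg_of_nonpos_of_nonpos (sub_nonpos.2 h) (sub_nonpos.2 (hf h))
  · exact mul_nonneg (sub_nonneg.2 h) (sub_nonneg.2 (hf h))

theorem trace_sub_mul_cfc_sub_le (hA : A.IsHermitian) (hB : B.IsHermitian) {f : ℝ → ℝ} {c : ℝ}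
    (hf : ∀ x y, (x - y) * (f y - f x) ≤ c * ((x - y) ^ 2 * (f x + f y))) :
    ((A - B) * (cfc f B - cfc f A)).trace ≤ c * ((A - B) ^ 2 * (cfc f A + cfc f B)).trace := by
  have hsq : (A - B) ^ 2 = (B - A) ^ 2 := by rw [← neg_sub, neg_sq]
  rw [mul_add, trace_add, trace_sub_sq_mul_cfc hA hB, hsq, trace_sub_sq_mul_cfc hB hA,
    trace_sub_mul_cfc_sub hA hB, Finset.sum_comm (f := fun i j => eigenOverlap hB hA i j * _),
    ← Finset.sum_add_distrib, Finset.mul_sum]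
  refine Finset.sum_le_sum fun i _ => ?_
  rw [← Finset.sum_add_distrib, Finset.mul_sum]
  refine Finset.sum_le_sum fun j _ => ?_
  rw [eigenOverlap_comm hB hA]
  linarith [mul_le_mul_of_nonneg_left (hf (hA.eigenvalues i) (hB.eigenvalues j))
    (eigenOverlap_nonneg hA hB i j)]

end TraceInequalities

section Gibbs

variable {ι : Type*} [Fintype ι] {A X : Matrix ι ι ℝ}

theorem trace_mul_nonneg (hX : 0 ≤ X) (hA : 0 ≤ A) : 0 ≤ (X * A).trace := by
  obtain ⟨Y, rfl⟩ := CStarAlgebra.nonneg_iff_eq_star_mul_self.1 hA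
  rw [← mul_assoc, trace_mul_comm, ← mul_assoc]
  exact (hX.posSemidef.mul_mul_conjTranspose_same Y).trace_nonneg

variable [DecidableEq ι]

/-- The matrix `exp (-t A)`, the (unnormalized) Gibbs state of the Hamiltonian `A` at inverse
temperature `t`. It is given by the functional calculus, so it is `0` unless `A` is symmetric. -/
def gibbs (t : ℝ) (A : Matrix ι ι ℝ) : Matrix ι ι ℝ := cfc (fun x => Real.exp (-t * x)) A

theorem gibbs_nonneg (t : ℝ) (A : Matrix ι ι ℝ) : 0 ≤ gibbs t A :=
  cfc_nonneg fun _ _ => (Real.exp_pos _).le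

theorem gibbs_zero (hA : A.IsHermitian) : gibbs 0 A = 1 := by
  simp only [gibbs, neg_zero, zero_mul, Real.exp_zero, cfc_const_one ℝ A hA.isSelfAdjoint]

theorem hasDerivAt_trace_gibbs (hA : A.IsHermitian) (t : ℝ) :
    HasDerivAt (fun t => (gibbs t A).trace) (-(A * gibbs t A).trace) t := by
  simp only [gibbs, self_mul_cfc hA, trace_cfc hA, ← Finset.sum_neg_distrib]
  refine HasDerivAt.fun_sum fun i _ => ?_
  exact ((hasDerivAt_neg' t).mul_const (hA.eigenvalues i)).exp.congr_deriv (by ring)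

theorem exp_mul_le_trace_gibbs (hA : A.IsHermitian) {s t : ℝ} (ht : 0 ≤ t)
    (hs : ¬ -s • (1 : Matrix ι ι ℝ) ≤ A) : Real.exp (t * s) ≤ (gibbs t A).trace := by
  obtain ⟨i, hi⟩ : ∃ i, hA.eigenvalues i < -s := by
    contrapose! hs
    rw [← Algebra.algebraMap_eq_smul_one, algebraMap_le_iff_le_spectrum (ha := hA.isSelfAdjoint),
      hA.spectrum_real_eq_range_eigenvalues]
    rintro _ ⟨i, rfl⟩
    exact hs i
  rw [gibbs, trace_cfc hA]
  calc Real.exp (t * s) ≤ Real.exp (-t * hA.eigenvalues i) :=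
        Real.exp_le_exp.2 (by nlinarith)
    _ ≤ _ := Finset.single_le_sum (f := fun i => Real.exp (-t * hA.eigenvalues i))
        (fun i _ => (Real.exp_pos _).le) (Finset.mem_univ i)

theorem trace_mul_gibbs_le (hA : A.IsHermitian) (hX : 0 ≤ X) {t : ℝ}
    (ht : 0 ≤ t) : (X * gibbs t (A + X)).trace ≤ (X * gibbs t A).trace := by
  have hB : (A + X).IsHermitian := hA.add hX.isSelfAdjoint
  have h := trace_sub_mul_cfc_sub_nonneg hB hA (f := fun x => Real.exp (-t * x))
    fun x y hxy => Real.exp_le_exp.2 (by nlinarith)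
  rwa [add_sub_cancel_left, mul_sub, trace_sub, sub_nonneg] at h

theorem sub_mul_exp_sub_exp_le {t : ℝ} (ht : 0 ≤ t) (x y : ℝ) :
    (x - y) * (Real.exp (-t * y) - Real.exp (-t * x)) ≤
      t * ((x - y) ^ 2 * (Real.exp (-t * x) + Real.exp (-t * y))) := by
  have htangent (x y : ℝ) :
      Real.exp (-t * x) - Real.exp (-t * y) ≤ t * (y - x) * Real.exp (-t * x) := by
    have h := mul_le_mul_of_nonneg_left (Real.add_one_le_exp (t * (x - y)))
      (Real.exp_pos (-t * x)).le
    rw [← Real.exp_add, show -t * x + t * (x - y) = -t * y by ring] at h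
    linarith
  have hx := mul_nonneg (mul_nonneg ht (sq_nonneg (x - y))) (Real.exp_pos (-t * x)).le
  have hy := mul_nonneg (mul_nonneg ht (sq_nonneg (x - y))) (Real.exp_pos (-t * y)).le
  rcases le_total x y with h | h
  · linarith [mul_le_mul_of_nonneg_left (htangent x y) (sub_nonneg.2 h)]
  · linarith [mul_le_mul_of_nonneg_left (htangent y x) (sub_nonneg.2 h)]

theorem trace_mul_gibbs_sub_le {R t : ℝ} (hA : A.IsHermitian) (hX : 0 ≤ X)
    (hR : 0 ≤ R) (hXX : X * X ≤ R • X) (ht : 0 ≤ t) :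
    (X * gibbs t A).trace - (X * gibbs t (A + X)).trace ≤ 2 * t * R * (X * gibbs t A).trace := by
  have hB : (A + X).IsHermitian := hA.add hX.isSelfAdjoint
  have hmean : (X * (gibbs t A - gibbs t (A + X))).trace ≤
      t * (X * X * (gibbs t (A + X) + gibbs t A)).trace := by
    simpa only [gibbs, add_sub_cancel_left, sq X] using
      trace_sub_mul_cfc_sub_le hB hA (sub_mul_exp_sub_exp_le ht)
  have hsq : (X * X * (gibbs t (A + X) + gibbs t A)).trace ≤
      R * (X * (gibbs t (A + X) + gibbs t A)).trace := by
    have h := trace_mul_nonneg (sub_nonneg.2 hXX)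
      (add_nonneg (gibbs_nonneg t (A + X)) (gibbs_nonneg t A))
    rwa [sub_mul, trace_sub, smul_mul_assoc, trace_smul, smul_eq_mul, sub_nonneg] at h
  have hmono := trace_mul_gibbs_le hA hX ht
  calc (X * gibbs t A).trace - (X * gibbs t (A + X)).trace
      = (X * (gibbs t A - gibbs t (A + X))).trace := by rw [mul_sub, trace_sub]
    _ ≤ t * (R * (X * (gibbs t (A + X) + gibbs t A)).trace) :=
        hmean.trans (mul_le_mul_of_nonneg_left hsq ht)
    _ = t * R * ((X * gibbs t (A + X)).trace + (X * gibbs t A).trace) := by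
        rw [mul_add, trace_add, mul_assoc]
    _ ≤ t * R * ((X * gibbs t A).trace + (X * gibbs t A).trace) := by gcongr
    _ = 2 * t * R * (X * gibbs t A).trace := by ring

end Gibbs

section BernoulliSum

variable {E : Type*} [Fintype E] [DecidableEq E] {p : E → ℝ}

/-- The probability that independent events of probabilities `p e` occur exactly for `e ∈ T`. -/
def bernoulliWeight (p : E → ℝ) (T : Finset E) : ℝ := ∏ e, if e ∈ T then p e else 1 - p e

theorem bernoulliWeight_nonneg (hp : ∀ e, 0 ≤ p e) (hp' : ∀ e, p e ≤ 1) (T : Finset E) :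
    0 ≤ bernoulliWeight p T := by
  refine Finset.prod_nonneg fun e _ => ?_
  split_ifs
  exacts [hp e, sub_nonneg.2 (hp' e)]

theorem sum_bernoulliWeight (p : E → ℝ) : ∑ T, bernoulliWeight p T = 1 := by
  calc ∑ T, bernoulliWeight p T = ∏ e, (p e + (1 - p e)) := by
        simp only [bernoulliWeight, Finset.prod_ite, Finset.prod_add, Finset.powerset_univ,
          Finset.sdiff_eq_filter, Finset.filter_mem_eq_inter, Finset.univ_inter]
    _ = 1 := by simp

theorem bernoulliWeight_insert (p : E → ℝ) {e : E} {T : Finset E} (he : e ∉ T) :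
    bernoulliWeight p (insert e T) * (1 - p e) = bernoulliWeight p T * p e := by
  have hrest : ∀ f ∈ Finset.univ.erase e, (if f ∈ insert e T then p f else 1 - p f) =
      if f ∈ T then p f else 1 - p f := fun f hf => by
    simp [Finset.ne_of_mem_erase hf]
  rw [bernoulliWeight, bernoulliWeight, ← Finset.mul_prod_erase _ _ (Finset.mem_univ e),
    ← Finset.mul_prod_erase _ _ (Finset.mem_univ e), Finset.prod_congr rfl hrest,
    if_pos (Finset.mem_insert_self e T), if_neg he]
  ring

theorem sum_finset_eq_sum_powerset_erase {M : Type*} [AddCommMonoid M] (e : E)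
    (F : Finset E → M) :
    ∑ T, F T = ∑ T ∈ (Finset.univ.erase e).powerset, (F T + F (insert e T)) := by
  rw [← Finset.powerset_univ, ← Finset.insert_erase (Finset.mem_univ e),
    Finset.sum_powerset_insert (Finset.notMem_erase e _), Finset.sum_add_distrib,
    Finset.erase_insert_eq_erase, Finset.erase_idem]

theorem sum_bernoulliWeight_mul_centered (p : E → ℝ) (e : E) (h : Finset E → ℝ) :
    ∑ T, bernoulliWeight p T * ((p e - if e ∈ T then 1 else 0) * h T) =
      p e * ∑ T ∈ (Finset.univ.erase e).powerset,
        bernoulliWeight p T * (h T - h (insert e T)) := by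
  rw [sum_finset_eq_sum_powerset_erase e, Finset.mul_sum]
  refine Finset.sum_congr rfl fun T hT => ?_
  have he : e ∉ T := fun heT => by simpa using Finset.mem_powerset.1 hT heT
  rw [if_neg he, if_pos (Finset.mem_insert_self e T)]
  linear_combination -h (insert e T) * bernoulliWeight_insert p he

theorem sum_bernoulliWeight_mul_centered_le (hp : ∀ e, 0 ≤ p e) (hp' : ∀ e, p e ≤ 1) {e : E}
    {h : Finset E → ℝ} {c : ℝ} (hc : 0 ≤ c) (hnonneg : ∀ T, 0 ≤ h T)
    (hinsert : ∀ T, e ∉ T → h T - h (insert e T) ≤ c * h T) :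
    ∑ T, bernoulliWeight p T * ((p e - if e ∈ T then 1 else 0) * h T) ≤
      p e * (c * ∑ T, bernoulliWeight p T * h T) := by
  have hw := bernoulliWeight_nonneg hp hp'
  rw [sum_bernoulliWeight_mul_centered, sum_finset_eq_sum_powerset_erase e (fun T => _ * h T),
    Finset.mul_sum (a := c)]
  refine mul_le_mul_of_nonneg_left (Finset.sum_le_sum fun T hT => ?_) (hp e)
  have he : e ∉ T := fun heT => by simpa using Finset.mem_powerset.1 hT heT
  have hpos := mul_nonneg hc (mul_nonneg (hw (insert e T)) (hnonneg (insert e T)))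
  linarith [mul_le_mul_of_nonneg_left (hinsert T he) (hw T)]

end BernoulliSum

section MatrixChernoff

variable {E ι : Type*} [Fintype E] {p : E → ℝ} {X : E → Matrix ι ι ℝ} {R K t : ℝ}

/-- The deviation `∑ₑ (1_{e ∈ T} - p e) X e` from its mean of the sum of the `X e` over the random
set `T` in which each `e` appears independently with probability `p e`. -/
def centeredSum (p : E → ℝ) (X : E → Matrix ι ι ℝ) (T : Finset E) : Matrix ι ι ℝ :=
  ∑ e ∈ T, X e - ∑ e, p e • X e

theorem isHermitian_centeredSum (p : E → ℝ) (hX : ∀ e, 0 ≤ X e) (T : Finset E) :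
    (centeredSum p X T).IsHermitian := by
  have hherm (e : E) : IsSelfAdjoint (X e) := (hX e).posSemidef.isHermitian
  exact (isSelfAdjoint_sum _ fun e _ => hherm e).sub
    (isSelfAdjoint_sum _ fun e _ => .smul (.all _) (hherm e))

variable [DecidableEq E]

theorem centeredSum_insert (p : E → ℝ) (X : E → Matrix ι ι ℝ) {e : E} {T : Finset E}
    (he : e ∉ T) : centeredSum p X (insert e T) = centeredSum p X T + X e := by
  rw [centeredSum, centeredSum, Finset.sum_insert he]
  abel

variable [Fintype ι]

theorem neg_trace_centeredSum_mul (p : E → ℝ) (X : E → Matrix ι ι ℝ) (T : Finset E)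
    (M : Matrix ι ι ℝ) :
    -(centeredSum p X T * M).trace =
      ∑ e, (p e - if e ∈ T then 1 else 0) * (X e * M).trace := by
  simp [centeredSum, sub_mul, Finset.sum_mul, trace_sum]

variable [DecidableEq ι]

/-- The matrix Laplace transform `E tr exp (-t S)` of the random matrix `S = centeredSum p X T`. -/
def laplaceTrace (p : E → ℝ) (X : E → Matrix ι ι ℝ) (t : ℝ) : ℝ :=
  ∑ T, bernoulliWeight p T * (gibbs t (centeredSum p X T)).trace

theorem laplaceTrace_zero (p : E → ℝ) (hX : ∀ e, 0 ≤ X e) :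
    laplaceTrace p X 0 = Fintype.card ι := by
  simp_rw [laplaceTrace, gibbs_zero (isHermitian_centeredSum p hX _), trace_one,
    ← Finset.sum_mul, sum_bernoulliWeight, one_mul]

theorem hasDerivAt_laplaceTrace (p : E → ℝ) (hX : ∀ e, 0 ≤ X e) (t : ℝ) :
    HasDerivAt (laplaceTrace p X) (∑ T, bernoulliWeight p T *
      -(centeredSum p X T * gibbs t (centeredSum p X T)).trace) t :=
  HasDerivAt.fun_sum fun T _ =>
    (hasDerivAt_trace_gibbs (isHermitian_centeredSum p hX T) t).const_mul _

theorem deriv_laplaceTrace_le (hp : ∀ e, 0 ≤ p e) (hp' : ∀ e, p e ≤ 1) (hX : ∀ e, 0 ≤ X e)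
    (hR : 0 ≤ R) (hXX : ∀ e, X e * X e ≤ R • X e) (hK : ∑ e, p e • X e ≤ K • 1) (ht : 0 ≤ t) :
    deriv (laplaceTrace p X) t ≤ 2 * R * K * t * laplaceTrace p X t := by
  have hresample (e : E) := sum_bernoulliWeight_mul_centered_le hp hp' (e := e)
    (h := fun T => (X e * gibbs t (centeredSum p X T)).trace) (c := 2 * t * R) (by positivity)
    (fun T => trace_mul_nonneg (hX e) (gibbs_nonneg _ _)) fun T he => by
      rw [centeredSum_insert p X he]
      exact trace_mul_gibbs_sub_le (isHermitian_centeredSum p hX T) (hX e) hR (hXX e) ht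
  have hmean (T : Finset E) : ∑ e, p e * (X e * gibbs t (centeredSum p X T)).trace ≤
      K * (gibbs t (centeredSum p X T)).trace := by
    have h := trace_mul_nonneg (sub_nonneg.2 hK) (gibbs_nonneg t (centeredSum p X T))
    simpa [sub_mul, Finset.sum_mul, trace_sum] using h
  rw [(hasDerivAt_laplaceTrace p hX t).deriv]
  calc _ = ∑ e, ∑ T, bernoulliWeight p T * ((p e - if e ∈ T then 1 else 0) *
          (X e * gibbs t (centeredSum p X T)).trace) := by
        simp_rw [neg_trace_centeredSum_mul, Finset.mul_sum]
        exact Finset.sum_comm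
    _ ≤ ∑ e, p e * (2 * t * R * ∑ T, bernoulliWeight p T *
          (X e * gibbs t (centeredSum p X T)).trace) := Finset.sum_le_sum fun e _ => hresample e
    _ = 2 * t * R * ∑ T, bernoulliWeight p T *
          ∑ e, p e * (X e * gibbs t (centeredSum p X T)).trace := by
        simp_rw [Finset.mul_sum]
        rw [Finset.sum_comm]
        exact Finset.sum_congr rfl fun T _ => Finset.sum_congr rfl fun e _ => by ring
    _ ≤ 2 * t * R * ∑ T, bernoulliWeight p T * (K * (gibbs t (centeredSum p X T)).trace) := by
        gcongr with T
        exacts [bernoulliWeight_nonneg hp hp' T, hmean T]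
    _ = 2 * R * K * t * laplaceTrace p X t := by
        simp_rw [mul_left_comm _ K, ← Finset.mul_sum, laplaceTrace]
        ring

theorem laplaceTrace_le (hp : ∀ e, 0 ≤ p e) (hp' : ∀ e, p e ≤ 1) (hX : ∀ e, 0 ≤ X e)
    (hR : 0 ≤ R) (hXX : ∀ e, X e * X e ≤ R • X e) (hK : ∑ e, p e • X e ≤ K • 1) (ht : 0 ≤ t) :
    laplaceTrace p X t ≤ Fintype.card ι * Real.exp (R * K * t ^ 2) := by
  have hderiv (τ : ℝ) : HasDerivAt (fun τ => laplaceTrace p X τ * Real.exp (-(R * K * τ ^ 2)))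
      ((deriv (laplaceTrace p X) τ - 2 * R * K * τ * laplaceTrace p X τ) *
        Real.exp (-(R * K * τ ^ 2))) τ := by
    have hexp := (((hasDerivAt_id' τ).pow 2).const_mul (R * K)).neg.exp
    exact ((hasDerivAt_laplaceTrace p hX τ).differentiableAt.hasDerivAt.mul hexp).congr_deriv
      (by simp; ring)
  have hanti : AntitoneOn (fun τ => laplaceTrace p X τ * Real.exp (-(R * K * τ ^ 2)))
      (Set.Ici 0) := by
    refine antitoneOn_of_deriv_nonpos (convex_Ici 0)
      (fun τ _ => (hderiv τ).continuousAt.continuousWithinAt)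
      (fun τ _ => (hderiv τ).differentiableAt.differentiableWithinAt) fun τ hτ => ?_
    rw [interior_Ici] at hτ
    rw [(hderiv τ).deriv]
    exact mul_nonpos_of_nonpos_of_nonneg
      (sub_nonpos.2 (deriv_laplaceTrace_le hp hp' hX hR hXX hK hτ.le)) (Real.exp_pos _).le
  have h := hanti Set.self_mem_Ici ht ht
  simp only [laplaceTrace_zero p hX] at h
  rw [Real.exp_neg, ← div_eq_mul_inv, div_le_iff₀ (Real.exp_pos _)] at h
  simpa using h

theorem sum_bernoulliWeight_not_le_centeredSum_le (hp : ∀ e, 0 ≤ p e) (hp' : ∀ e, p e ≤ 1)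
    (hX : ∀ e, 0 ≤ X e) (hR : 0 ≤ R) (hXX : ∀ e, X e * X e ≤ R • X e)
    (hK : ∑ e, p e • X e ≤ K • 1) (ht : 0 ≤ t) (s : ℝ) :
    ∑ T with ¬ -s • (1 : Matrix ι ι ℝ) ≤ centeredSum p X T, bernoulliWeight p T ≤
      Fintype.card ι * Real.exp (R * K * t ^ 2 - t * s) := by
  have hmarkov : Real.exp (t * s) * ∑ T with ¬ -s • (1 : Matrix ι ι ℝ) ≤ centeredSum p X T,
      bernoulliWeight p T ≤ laplaceTrace p X t := by
    rw [Finset.mul_sum]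
    refine (Finset.sum_le_sum fun T hT => ?_).trans (Finset.sum_le_univ_sum_of_nonneg fun T =>
      mul_nonneg (bernoulliWeight_nonneg hp hp' T) (gibbs_nonneg t _).posSemidef.trace_nonneg)
    rw [mul_comm]
    exact mul_le_mul_of_nonneg_left (exp_mul_le_trace_gibbs (isHermitian_centeredSum p hX T) ht
      (Finset.mem_filter.1 hT).2) (bernoulliWeight_nonneg hp hp' T)
  rw [sub_eq_add_neg, Real.exp_add, Real.exp_neg, ← mul_assoc, ← div_eq_mul_inv,
    le_div_iff₀ (Real.exp_pos _), mul_comm]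
  exact hmarkov.trans (laplaceTrace_le hp hp' hX hR hXX hK ht)

end MatrixChernoff

section CourantFischer

variable {A : Matrix (Fin n) (Fin n) ℝ}

theorem sort_roots_charpoly (hA : A.IsHermitian) : A.charpoly.roots.sort (· ≤ ·) =
    List.ofFn (hA.eigenvalues ∘ Tuple.sort hA.eigenvalues) := by
  have hroots : (List.ofFn (hA.eigenvalues ∘ Tuple.sort hA.eigenvalues) : Multiset ℝ) =
      A.charpoly.roots := by
    rw [Multiset.coe_eq_coe.2 (Equiv.Perm.ofFn_comp_perm _ _), ← Fin.univ_val_map,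
      hA.roots_charpoly_eq_eigenvalues]
    rfl
  rw [← hroots, Multiset.coe_sort]
  refine List.mergeSort_of_pairwise ?_
  simpa using (Tuple.monotone_sort hA.eigenvalues).sortedLE_ofFn.pairwise

theorem eig_eq_eigenvalues_sort (hA : A.IsHermitian) (k : Fin n) :
    eig A k = hA.eigenvalues (Tuple.sort hA.eigenvalues k) := by
  rw [eig, sort_roots_charpoly hA, List.getD_eq_getElem _ _ (by simp)]
  simp

theorem eig_le_eig (hA : A.IsHermitian) {j k : Fin n} (hjk : j ≤ k) : eig A j ≤ eig A k := by
  rw [eig_eq_eigenvalues_sort hA, eig_eq_eigenvalues_sort hA]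
  exact Tuple.monotone_sort hA.eigenvalues hjk

theorem exists_sorted_eigencoordinates (hA : A.IsHermitian) :
    ∃ Φ : (Fin n → ℝ) →ₗ[ℝ] Fin n → ℝ, ∀ x, x ⬝ᵥ x = ∑ j, Φ x j ^ 2 ∧
      x ⬝ᵥ A *ᵥ x = ∑ j : Fin n, eig A j * Φ x j ^ 2 := by
  obtain ⟨U, hUU, hA'⟩ : ∃ U : Matrix (Fin n) (Fin n) ℝ, U * Uᵀ = 1 ∧
      A = U * diagonal hA.eigenvalues * Uᵀ :=
    ⟨hA.eigenvectorUnitary, Unitary.coe_mul_star_self hA.eigenvectorUnitary, hA.spectral_theorem⟩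
  have hform (d : Fin n → ℝ) (x : Fin n → ℝ) :
      x ⬝ᵥ (U * diagonal d * Uᵀ) *ᵥ x = ∑ i, d i * (x ᵥ* U) i ^ 2 := by
    rw [← mulVec_mulVec, ← mulVec_mulVec, dotProduct_mulVec, mulVec_transpose, dotProduct]
    exact Finset.sum_congr rfl fun i _ => by rw [mulVec_diagonal]; ring
  let σ := Tuple.sort hA.eigenvalues
  refine ⟨LinearMap.funLeft ℝ ℝ σ ∘ₗ U.vecMulLinear, fun x => ⟨?_, ?_⟩⟩
  · have h := hform (fun _ => 1) x
    rw [diagonal_one, mul_one, hUU, one_mulVec, ← Equiv.sum_comp σ] at h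
    simpa using h
  · have h := hform hA.eigenvalues x
    rw [← hA', ← Equiv.sum_comp σ] at h
    simpa [eig_eq_eigenvalues_sort hA] using h

theorem exists_mem_ne_zero_forall_eq_zero {K M ι : Type*} [Field K] [AddCommGroup M] [Module K M]
    {V : Submodule K M} [FiniteDimensional K V] (φ : ι → M →ₗ[K] K) {s : Finset ι}
    (hs : s.card < Module.finrank K V) : ∃ x ∈ V, x ≠ 0 ∧ ∀ i ∈ s, φ i x = 0 := by
  let ψ : V →ₗ[K] s → K := LinearMap.pi fun i => φ i ∘ₗ V.subtype
  obtain ⟨x, hx, hx0⟩ := (LinearMap.ker ψ).ne_bot_iff.1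
    (LinearMap.ker_ne_bot_of_finrank_lt (f := ψ) (by simpa using hs))
  exact ⟨x, x.2, by simpa using hx0, fun i hi => congrFun (LinearMap.mem_ker.1 hx) ⟨i, hi⟩⟩

theorem le_eig_of_forall_mem (hA : A.IsHermitian) {V : Submodule ℝ (Fin n → ℝ)} {k : Fin n} {c : ℝ}
    (hV : n ≤ Module.finrank ℝ V + k) (h : ∀ x ∈ V, c * (x ⬝ᵥ x) ≤ x ⬝ᵥ A *ᵥ x) :
    c ≤ eig A k := by
  obtain ⟨Φ, hΦ⟩ := exists_sorted_eigencoordinates hA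
  obtain ⟨x, hxV, hx0, hx⟩ := exists_mem_ne_zero_forall_eq_zero (V := V) (s := Finset.Ioi k)
    (fun j => LinearMap.proj j ∘ₗ Φ) (by rw [Fin.card_Ioi]; omega)
  have hpos : 0 < x ⬝ᵥ x := by
    simpa using dotProduct_star_self_pos_iff.2 hx0
  refine le_of_mul_le_mul_right ((h x hxV).trans ?_) hpos
  rw [(hΦ x).1, (hΦ x).2, Finset.mul_sum]
  refine Finset.sum_le_sum fun j _ => ?_
  rcases le_or_gt j k with hj | hj
  · exact mul_le_mul_of_nonneg_right (eig_le_eig hA hj) (sq_nonneg _)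
  · simp [show Φ x j = 0 from hx j (Finset.mem_Ioi.2 hj)]

theorem eig_le_of_forall_mem (hA : A.IsHermitian) {V : Submodule ℝ (Fin n → ℝ)} {k : Fin n} {c : ℝ}
    (hV : k < Module.finrank ℝ V) (h : ∀ x ∈ V, x ⬝ᵥ A *ᵥ x ≤ c * (x ⬝ᵥ x)) :
    eig A k ≤ c := by
  obtain ⟨Φ, hΦ⟩ := exists_sorted_eigencoordinates hA
  obtain ⟨x, hxV, hx0, hx⟩ := exists_mem_ne_zero_forall_eq_zero (V := V) (s := Finset.Iio k)
    (fun j => LinearMap.proj j ∘ₗ Φ) (by rwa [Fin.card_Iio])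
  have hpos : 0 < x ⬝ᵥ x := by
    simpa using dotProduct_star_self_pos_iff.2 hx0
  refine le_of_mul_le_mul_right (le_trans ?_ (h x hxV)) hpos
  rw [(hΦ x).1, (hΦ x).2, Finset.mul_sum]
  refine Finset.sum_le_sum fun j _ => ?_
  rcases le_or_gt k j with hj | hj
  · exact mul_le_mul_of_nonneg_right (eig_le_eig hA hj) (sq_nonneg _)
  · simp [show Φ x j = 0 from hx j (Finset.mem_Iio.2 hj)]

end CourantFischer

section EdgeLaplacian

variable {W W' : Matrix (Fin n) (Fin n) ℝ}

/-- Unordered pairs of distinct vertices, encoded as increasing ordered pairs to match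
`IsEdgeProduct`. -/
abbrev VertexPair (n : ℕ) := {e : Fin n × Fin n // e.1 < e.2}

/-- The Laplacian `(δ_v - δ_w)(δ_v - δ_w)ᵀ` of the graph with the single edge `e = vw`. -/
def edgeLap (e : Fin n × Fin n) : Matrix (Fin n) (Fin n) ℝ :=
  vecMulVec (Pi.single e.1 1 - Pi.single e.2 1) (Pi.single e.1 1 - Pi.single e.2 1)

theorem edgeLap_nonneg (e : Fin n × Fin n) : 0 ≤ edgeLap e := by
  simpa [edgeLap] using
    (posSemidef_vecMulVec_self_star (Pi.single e.1 1 - Pi.single e.2 1 : Fin n → ℝ)).nonneg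

theorem edgeLap_swap (e : Fin n × Fin n) : edgeLap e.swap = edgeLap e := by
  rw [edgeLap, Prod.fst_swap, Prod.snd_swap, ← neg_sub (Pi.single e.1 1), neg_vecMulVec,
    vecMulVec_neg, neg_neg, edgeLap]

theorem edgeLap_mul_self {e : Fin n × Fin n} (he : e.1 ≠ e.2) :
    edgeLap e * edgeLap e = (2 : ℝ) • edgeLap e := by
  have hnorm : (Pi.single e.1 1 - Pi.single e.2 1 : Fin n → ℝ) ⬝ᵥ
      (Pi.single e.1 1 - Pi.single e.2 1) = 2 := by
    norm_num [he, he.symm]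
  rw [edgeLap, vecMulVec_mul_vecMulVec, hnorm, vecMulVec_smul]

theorem dotProduct_edgeLap_mulVec (e : Fin n × Fin n) (x : Fin n → ℝ) :
    x ⬝ᵥ edgeLap e *ᵥ x = (x e.1 - x e.2) ^ 2 := by
  have hdiff : (Pi.single e.1 1 - Pi.single e.2 1) ⬝ᵥ x = x e.1 - x e.2 := by
    simp [sub_dotProduct]
  simp [edgeLap, vecMulVec_mulVec, hdiff, dotProduct_comm x, sq]

theorem sum_eq_two_nsmul_sum_vertexPair {M : Type*} [AddCommMonoid M] {F : Fin n × Fin n → M}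
    (hswap : ∀ e, F e.swap = F e) (hdiag : ∀ v, F (v, v) = 0) :
    ∑ e, F e = 2 • ∑ e : VertexPair n, F e := by
  let H (e : Fin n × Fin n) : M := if e.1 < e.2 then F e else 0
  have hsplit (e : Fin n × Fin n) : F e = H e + H e.swap := by
    obtain ⟨v, w⟩ := e
    rcases lt_trichotomy v w with h | rfl | h
    · simp [H, h, h.not_gt]
    · simp [H, hdiag]
    · simpa [H, h, h.not_gt] using (hswap (v, w)).symm
  have hreindex : ∑ e : Fin n × Fin n, H e.swap = ∑ e, H e := Equiv.sum_comp (Equiv.prodComm _ _) H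
  rw [Finset.sum_congr rfl fun e _ => hsplit e, Finset.sum_add_distrib, hreindex, ← two_nsmul,
    ← Finset.sum_filter, Finset.sum_subtype _ (p := fun e => e.1 < e.2) (by simp)]

theorem wlap_eq_sum_edgeLap (hW : W.IsSymm) :
    wlap W = ∑ e : VertexPair n, W e.1.1 e.1.2 • edgeLap e.1 := by
  have hordered : ∑ e : Fin n × Fin n, W e.1 e.2 • edgeLap e = 2 • wlap W := by
    ext a b
    simp only [edgeLap, wlap, Matrix.sum_apply, Matrix.smul_apply, Matrix.sub_apply,
      vecMulVec_apply, diagonal_apply, Pi.sub_apply, Pi.single_apply, mul_sub, mul_ite, mul_one,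
      mul_zero, smul_eq_mul, nsmul_eq_mul, Nat.cast_ofNat, Fintype.sum_prod_type,
      Finset.sum_sub_distrib, Finset.sum_ite_irrel, Finset.sum_const_zero, Finset.sum_ite_eq,
      Finset.mem_univ, if_true, hW.apply]
    split_ifs with hab
    · subst hab; ring
    · ring
  rw [sum_eq_two_nsmul_sum_vertexPair (F := fun e => W e.1 e.2 • edgeLap e)] at hordered
  · rw [← Nat.cast_smul_eq_nsmul ℝ, ← Nat.cast_smul_eq_nsmul ℝ] at hordered
    exact (smul_right_injective _ (by norm_num) hordered).symm
  · intro e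
    simp [edgeLap_swap, hW.apply]
  · simp [edgeLap]

theorem isHermitian_wlap (hW : W.IsSymm) : (wlap W).IsHermitian := by
  have hdiag : (diagonal fun v => ∑ w, W v w).IsHermitian := isHermitian_diagonal _
  exact hdiag.sub (by simpa [IsHermitian] using hW.eq)

theorem dotProduct_wlap_mulVec (hW : W.IsSymm) (x : Fin n → ℝ) :
    x ⬝ᵥ wlap W *ᵥ x = ∑ e : VertexPair n, W e.1.1 e.1.2 * (x e.1.1 - x e.1.2) ^ 2 := by
  simp_rw [wlap_eq_sum_edgeLap hW, sum_mulVec, dotProduct_sum, smul_mulVec, dotProduct_smul,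
    dotProduct_edgeLap_mulVec, smul_eq_mul]

theorem wlap_le_wlap (hW : W.IsSymm) (hW' : W'.IsSymm) (h : ∀ v w, v ≠ w → W v w ≤ W' v w) :
    wlap W ≤ wlap W' := by
  rw [wlap_eq_sum_edgeLap hW, wlap_eq_sum_edgeLap hW']
  exact Finset.sum_le_sum fun e _ => smul_le_smul_of_nonneg_right (h _ _ e.2.ne) (edgeLap_nonneg _)

theorem wlap_vecMulVec_self (f : Fin n → ℝ) :
    wlap (vecMulVec f f) = (∑ v, f v) • diagonal f - vecMulVec f f := by
  ext v w
  simp [wlap, vecMulVec_apply, ← Finset.mul_sum, diagonal_apply, mul_comm]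

theorem dotProduct_wlap_vecMulVec_self_mulVec {f x : Fin n → ℝ} (hfx : f ⬝ᵥ x = 0) :
    x ⬝ᵥ wlap (vecMulVec f f) *ᵥ x = (∑ v, f v) * (x ⬝ᵥ diagonal f *ᵥ x) := by
  simp [wlap_vecMulVec_self, sub_mulVec, smul_mulVec, vecMulVec_mulVec, hfx]

theorem wlap_add (W W' : Matrix (Fin n) (Fin n) ℝ) : wlap (W + W') = wlap W + wlap W' := by
  ext v w
  simp only [wlap, Finset.sum_add_distrib, Matrix.sub_apply, Matrix.add_apply, diagonal_apply]
  split_ifs <;> ring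

theorem wlap_smul (c : ℝ) (W : Matrix (Fin n) (Fin n) ℝ) : wlap (c • W) = c • wlap W := by
  ext v w
  simp [wlap, diagonal_apply, ← Finset.mul_sum, mul_sub]

theorem wlap_const_le {b : ℝ} (hb : 0 ≤ b) :
    wlap (of fun _ _ : Fin n => b) ≤ (n * b) • (1 : Matrix (Fin n) (Fin n) ℝ) := by
  have hconst : (of fun _ _ : Fin n => b) = b • vecMulVec (1 : Fin n → ℝ) 1 := by
    ext; simp
  have hones : 0 ≤ vecMulVec (1 : Fin n → ℝ) (1 : Fin n → ℝ) := by
    simpa using (posSemidef_vecMulVec_self_star (1 : Fin n → ℝ)).nonneg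
  have hdiag : b • (∑ v, (1 : Fin n → ℝ) v) • diagonal (1 : Fin n → ℝ) = (n * b) • 1 := by
    simp [smul_smul, mul_comm]
  rw [hconst, wlap_smul, wlap_vecMulVec_self, smul_sub, hdiag]
  exact sub_le_self _ (smul_nonneg hb hones)

end EdgeLaplacian

section RandomGraph

variable {P : Fin n → Fin n → ℝ} {μ : PMF (SimpleGraph (Fin n))}

/-- The edge set of a graph, as a set of vertex pairs. -/
def edgePairs (G : SimpleGraph (Fin n)) : Finset (VertexPair n) := {e | G.Adj e.1.1 e.1.2}

theorem edgePairs_injective : Function.Injective (edgePairs (n := n)) := by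
  intro G H hGH
  have hlt {v w : Fin n} (h : v < w) : G.Adj v w ↔ H.Adj v w := by
    simpa [edgePairs] using Finset.ext_iff.1 hGH ⟨(v, w), h⟩
  ext v w
  rcases lt_trichotomy v w with h | rfl | h
  · exact hlt h
  · simp
  · rw [G.adj_comm, H.adj_comm, hlt h]

theorem isSymm_adjM (G : SimpleGraph (Fin n)) : (adjM G).IsSymm := by
  ext v w
  simp [adjM, G.adj_comm]

theorem isSymm_offP (hP : ∀ v w, P v w = P w v) : (offP P).IsSymm := by
  ext v w
  simp [offP, hP v w, eq_comm]

theorem expLap_eq_sum_edgeLap (hP : ∀ v w, P v w = P w v) :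
    expLap P = ∑ e : VertexPair n, P e.1.1 e.1.2 • edgeLap e.1 := by
  have hne (e : VertexPair n) : e.1.1 ≠ e.1.2 := e.2.ne
  rw [expLap, wlap_eq_sum_edgeLap (isSymm_offP hP)]
  simp [offP, hne]

theorem lap_sub_expLap (hP : ∀ v w, P v w = P w v) (G : SimpleGraph (Fin n)) :
    lap G - expLap P = centeredSum (fun e : VertexPair n => P e.1.1 e.1.2)
      (fun e => edgeLap e.1) (edgePairs G) := by
  rw [lap, expLap_eq_sum_edgeLap hP, wlap_eq_sum_edgeLap (isSymm_adjM G)]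
  simp [centeredSum, edgePairs, adjM, Finset.sum_filter]

theorem apply_eq_ofReal_bernoulliWeight (h0 : ∀ v w, v ≠ w → 0 ≤ P v w)
    (h1 : ∀ v w, v ≠ w → P v w ≤ 1) (hμ : IsEdgeProduct P μ) (G : SimpleGraph (Fin n)) :
    μ G = ENNReal.ofReal
      (bernoulliWeight (fun e : VertexPair n => P e.1.1 e.1.2) (edgePairs G)) := by
  rw [hμ G, bernoulliWeight, Finset.prod_subtype _ (p := fun e => e.1 < e.2) (by simp),
    ENNReal.ofReal_prod_of_nonneg]
  · refine Finset.prod_congr rfl fun e _ => ?_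
    simp [edgePairs, apply_ite ENNReal.ofReal]
  · intro e _
    split_ifs
    exacts [h0 _ _ e.2.ne, sub_nonneg.2 (h1 _ _ e.2.ne)]

theorem toMeasure_edgePairs_le (h0 : ∀ v w, v ≠ w → 0 ≤ P v w)
    (h1 : ∀ v w, v ≠ w → P v w ≤ 1) (hμ : IsEdgeProduct P μ) (Q : Finset (VertexPair n) → Prop) :
    μ.toMeasure {G | Q (edgePairs G)} ≤ ENNReal.ofReal
      (∑ T with Q T, bernoulliWeight (fun e : VertexPair n => P e.1.1 e.1.2) T) := by
  set w := bernoulliWeight fun e : VertexPair n => P e.1.1 e.1.2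
  have hw0 (T : Finset (VertexPair n)) : 0 ≤ w T :=
    bernoulliWeight_nonneg (fun e => h0 _ _ e.2.ne) (fun e => h1 _ _ e.2.ne) T
  calc μ.toMeasure {G | Q (edgePairs G)}
      = ∑ G with Q (edgePairs G), μ G := by
        rw [← μ.toMeasure_apply_finset]
        simp
    _ = ∑ T ∈ Finset.image edgePairs {G | Q (edgePairs G)}, ENNReal.ofReal (w T) := by
        rw [Finset.sum_image edgePairs_injective.injOn]
        exact Finset.sum_congr rfl fun G _ => apply_eq_ofReal_bernoulliWeight h0 h1 hμ G
    _ ≤ ∑ T with Q T, ENNReal.ofReal (w T) := by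
        refine Finset.sum_le_sum_of_subset fun T hT => ?_
        obtain ⟨G, hG, rfl⟩ := Finset.mem_image.1 hT
        simpa using hG
    _ = ENNReal.ofReal (∑ T with Q T, w T) :=
        (ENNReal.ofReal_sum_of_nonneg fun T _ => hw0 T).symm

theorem toMeasure_not_le_lap_sub_expLap_le_exp (hP : ∀ v w, P v w = P w v)
    (h0 : ∀ v w, v ≠ w → 0 ≤ P v w) (h1 : ∀ v w, v ≠ w → P v w ≤ 1) (hμ : IsEdgeProduct P μ)
    {K t : ℝ} (hK : expLap P ≤ K • 1) (ht : 0 ≤ t) (s : ℝ) :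
    μ.toMeasure {G | ¬ -s • (1 : Matrix (Fin n) (Fin n) ℝ) ≤ lap G - expLap P} ≤
      ENNReal.ofReal (n * Real.exp (2 * K * t ^ 2 - t * s)) := by
  rw [expLap_eq_sum_edgeLap hP] at hK
  have htail := sum_bernoulliWeight_not_le_centeredSum_le (fun e => h0 _ _ e.2.ne)
    (fun e => h1 _ _ e.2.ne) (fun e : VertexPair n => edgeLap_nonneg e.1) zero_le_two
    (fun e => (edgeLap_mul_self e.2.ne).le) hK ht s
  rw [Fintype.card_fin] at htail
  simp only [lap_sub_expLap hP]
  refine (toMeasure_edgePairs_le h0 h1 hμ fun T => ¬ -s • (1 : Matrix (Fin n) (Fin n) ℝ) ≤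
    centeredSum (fun e : VertexPair n => P e.1.1 e.1.2) (fun e => edgeLap e.1) T).trans
      (ENNReal.ofReal_le_ofReal ?_)
  convert htail

end RandomGraph

theorem dotProduct_mulVec_mono {ι : Type*} [Fintype ι] {A B : Matrix ι ι ℝ} (h : A ≤ B)
    (x : ι → ℝ) : x ⬝ᵥ A *ᵥ x ≤ x ⬝ᵥ B *ᵥ x := by
  have hBA := (le_iff.1 h).dotProduct_mulVec_nonneg x
  rwa [star_trivial, sub_mulVec, dotProduct_sub, sub_nonneg] at hBA

section TwoCommunities

variable {p pbar q : ℝ} {P : Fin n → Fin n → ℝ} {x : Fin n → ℝ}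

/-- The `±1` indicator of the planted partition, which is `√n • u2star n`. -/
def communitySign (n : ℕ) (v : Fin n) : ℝ := if inP1 n v then 1 else -1

theorem communitySign_mul (v w : Fin n) :
    communitySign n v * communitySign n w = if sameSide n v w then 1 else -1 := by
  by_cases hv : inP1 n v <;> by_cases hw : inP1 n w <;> simp [communitySign, sameSide, hv, hw]

theorem sum_communitySign (hn : Even n) : ∑ v, communitySign n v = 0 := by
  obtain ⟨m, rfl⟩ := hn
  have hleft (v : Fin m) : communitySign (m + m) (Fin.castAdd m v) = 1 :=
    if_pos (show (v : ℕ) < (m + m) / 2 by omega)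
  have hright (v : Fin m) : communitySign (m + m) (Fin.natAdd m v) = -1 :=
    if_neg (show ¬ m + (v : ℕ) < (m + m) / 2 by omega)
  simp only [Fin.sum_univ_add, hleft, hright]
  simp

theorem linearIndependent_one_communitySign (hn : 1 < n) :
    LinearIndependent ℝ ![1, communitySign n] := by
  have hfirst : communitySign n ⟨0, by omega⟩ = 1 := if_pos (show 0 < n / 2 by omega)
  have hsecond : communitySign n ⟨n / 2, by omega⟩ = -1 := if_neg (lt_irrefl (n / 2))
  refine LinearIndependent.pair_iff.2 fun a b hab => ?_
  have h1 := congrFun hab ⟨0, by omega⟩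
  have h2 := congrFun hab ⟨n / 2, by omega⟩
  simp only [Pi.add_apply, Pi.smul_apply, Pi.one_apply, Pi.zero_apply, hfirst, hsecond,
    smul_eq_mul] at h1 h2
  constructor <;> linarith

theorem NSSBMprob.nonneg (h : NSSBMprob n p pbar q P) (hq : 0 ≤ q) (hqp : q ≤ p) {v w : Fin n}
    (hvw : v ≠ w) : 0 ≤ P v w := by
  by_cases hs : sameSide n v w
  · exact hq.trans (hqp.trans (h.2.1 v w hvw hs).1)
  · rwa [h.2.2 v w hs]

theorem NSSBMprob.le (h : NSSBMprob n p pbar q P) (hqp : q ≤ pbar) {v w : Fin n}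
    (hvw : v ≠ w) : P v w ≤ pbar := by
  by_cases hs : sameSide n v w
  · exact (h.2.1 v w hvw hs).2
  · rwa [h.2.2 v w hs]

theorem expLap_le {b : ℝ} (hP : ∀ v w, P v w = P w v) (hPb : ∀ v w, v ≠ w → P v w ≤ b)
    (hb : 0 ≤ b) : expLap P ≤ (n * b) • 1 := by
  refine (wlap_le_wlap (isSymm_offP hP) (by ext; simp) fun v w hvw => ?_).trans (wlap_const_le hb)
  simpa [offP, hvw] using hPb v w hvw

/-- The matrix on the left is the expected Laplacian of the homogeneous model with probabilities
`p` and `q`. -/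
theorem NSSBMprob.wlap_le_expLap (h : NSSBMprob n p pbar q P) :
    wlap (((p + q) / 2) • vecMulVec 1 1 +
      ((p - q) / 2) • vecMulVec (communitySign n) (communitySign n)) ≤ expLap P := by
  refine wlap_le_wlap (by ext; simp [vecMulVec_apply, mul_comm]) (isSymm_offP h.1)
    fun v w hvw => ?_
  simp only [Matrix.add_apply, Matrix.smul_apply, vecMulVec_apply, communitySign_mul, offP,
    of_apply, if_neg hvw, Pi.one_apply, smul_eq_mul]
  by_cases hs : sameSide n v w
  · rw [if_pos hs]
    linarith [(h.2.1 v w hvw hs).1]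
  · rw [if_neg hs, h.2.2 v w hs]
    linarith

theorem NSSBMprob.le_dotProduct_expLap_mulVec (h : NSSBMprob n p pbar q P) (hn : Even n)
    (hone : 1 ⬝ᵥ x = 0) (hsign : communitySign n ⬝ᵥ x = 0) :
    n * ((p + q) / 2) * (x ⬝ᵥ x) ≤ x ⬝ᵥ expLap P *ᵥ x := by
  have hle := dotProduct_mulVec_mono h.wlap_le_expLap x
  simp only [wlap_add, wlap_smul, add_mulVec, smul_mulVec, dotProduct_add, dotProduct_smul,
    dotProduct_wlap_vecMulVec_self_mulVec hone, dotProduct_wlap_vecMulVec_self_mulVec hsign,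
    sum_communitySign hn, zero_mul, diagonal_one', one_mulVec, smul_eq_mul,
    Pi.one_apply, Finset.sum_const, Finset.card_univ, Fintype.card_fin, nsmul_eq_mul, mul_one]
    at hle
  linarith

theorem NSSBMprob.dotProduct_expLap_mulVec_le (h : NSSBMprob n p pbar q P) (hq : 0 ≤ q)
    (a b : ℝ) (hx : x = a • 1 + b • communitySign n) :
    x ⬝ᵥ expLap P *ᵥ x ≤ n * q * (x ⬝ᵥ x) := by
  have hcross : x ⬝ᵥ expLap P *ᵥ x = x ⬝ᵥ wlap (of fun _ _ => q) *ᵥ x := by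
    rw [expLap, dotProduct_wlap_mulVec (isSymm_offP h.1), dotProduct_wlap_mulVec (by ext; simp)]
    refine Finset.sum_congr rfl fun e _ => ?_
    by_cases hs : sameSide n e.1.1 e.1.2
    · simp [hx, communitySign, hs.eq]
    · simp [offP, e.2.ne, h.2.2 _ _ hs]
  have hle := dotProduct_mulVec_mono (wlap_const_le (n := n) hq) x
  rwa [← hcross, smul_mulVec, one_mulVec, dotProduct_smul, smul_eq_mul] at hle

theorem NSSBMprob.eig_expLap_one_le (h : NSSBMprob n p pbar q P) (hn : 1 < n) (hq : 0 ≤ q) :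
    eig (expLap P) 1 ≤ n * q := by
  have hrank := finrank_span_eq_card (linearIndependent_one_communitySign hn)
  refine eig_le_of_forall_mem (isHermitian_wlap (isSymm_offP h.1)) (k := ⟨1, hn⟩)
    (V := Submodule.span ℝ (Set.range ![1, communitySign n])) (by simp [hrank]) fun x hx => ?_
  obtain ⟨c, rfl⟩ := (Submodule.mem_span_range_iff_exists_fun ℝ).1 hx
  exact h.dotProduct_expLap_mulVec_le hq (c 0) (c 1) (Fin.sum_univ_two _)

theorem NSSBMprob.le_eig_lap_two {G : SimpleGraph (Fin n)} {s : ℝ}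
    (h : NSSBMprob n p pbar q P) (hn : Even n) (hn2 : 2 < n) (hG : -s • 1 ≤ lap G - expLap P) :
    n * ((p + q) / 2) - s ≤ eig (lap G) 2 := by
  let Φ : (Fin n → ℝ) →ₗ[ℝ] Fin 2 → ℝ := (of ![1, communitySign n]).mulVecLin
  have hrank : n ≤ Module.finrank ℝ (LinearMap.ker Φ) + 2 := by
    have hnullity := Φ.finrank_range_add_finrank_ker
    have hrange := Submodule.finrank_le (LinearMap.range Φ)
    rw [Module.finrank_fin_fun] at hnullity hrange
    omega
  refine le_eig_of_forall_mem (isHermitian_wlap (isSymm_adjM G)) (k := ⟨2, hn2⟩) hrank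
    fun x hx => ?_
  have hmean := h.le_dotProduct_expLap_mulVec hn
    (congrFun (LinearMap.mem_ker.1 hx) 0) (congrFun (LinearMap.mem_ker.1 hx) 1)
  have hdev := dotProduct_mulVec_mono hG x
  rw [smul_mulVec, one_mulVec, dotProduct_smul, smul_eq_mul, sub_mulVec, dotProduct_sub] at hdev
  change _ ≤ x ⬝ᵥ lap G *ᵥ x
  linarith

end TwoCommunities

section Gap

variable {p pbar q δ : ℝ} {P : Fin n → Fin n → ℝ} {μ : PMF (SimpleGraph (Fin n))}

theorem mul_exp_le_of_three_mul_sqrt_le {a K s : ℝ} (ha : 0 < a) (hδ : 0 < δ) (hK : 0 < K)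
    (hlog : 0 ≤ Real.log (a / δ)) (hs : 3 * √(K * Real.log (a / δ)) ≤ s) :
    a * Real.exp (2 * K * (s / (4 * K)) ^ 2 - s / (4 * K) * s) ≤ δ := by
  have hsq : 9 * (K * Real.log (a / δ)) ≤ s ^ 2 := by
    calc 9 * (K * Real.log (a / δ)) = (3 * √(K * Real.log (a / δ))) ^ 2 := by
          rw [mul_pow, Real.sq_sqrt (by positivity)]; norm_num
      _ ≤ s ^ 2 := by gcongr
  have hexponent : 2 * K * (s / (4 * K)) ^ 2 - s / (4 * K) * s ≤ -Real.log (a / δ) := by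
    have hquad : 2 * K * (s / (4 * K)) ^ 2 - s / (4 * K) * s = -(s ^ 2 / (8 * K)) := by
      field_simp; ring
    rw [hquad, neg_le_neg_iff, le_div_iff₀ (by positivity)]
    nlinarith
  calc a * Real.exp (2 * K * (s / (4 * K)) ^ 2 - s / (4 * K) * s)
      ≤ a * Real.exp (-Real.log (a / δ)) := by gcongr
    _ = δ := by rw [Real.exp_neg, Real.exp_log (by positivity)]; field_simp

theorem NSSBMprob.toMeasure_not_le_lap_sub_expLap_le (h : NSSBMprob n p pbar q P)
    (hμ : IsEdgeProduct P μ) (hn : 0 < n) (hq : 0 ≤ q) (hqp : q < p) (hpp : p ≤ pbar)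
    (hp1 : pbar ≤ 1) (hδ : 0 < δ) (hlog : 0 ≤ Real.log (n / δ)) {s : ℝ}
    (hs : 3 * √(n * pbar * Real.log (n / δ)) ≤ s) :
    μ.toMeasure {G | ¬ -s • (1 : Matrix (Fin n) (Fin n) ℝ) ≤ lap G - expLap P} ≤
      ENNReal.ofReal δ := by
  have hpbar : 0 < pbar := by linarith
  have hle {v w : Fin n} (hvw : v ≠ w) : P v w ≤ pbar := h.le (by linarith) hvw
  have hs0 : 0 ≤ s := by linarith [Real.sqrt_nonneg (n * pbar * Real.log (n / δ))]
  have hn' : (0 : ℝ) < n := Nat.cast_pos.2 hn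
  -- `t = s / (4 K)` minimizes the exponent `2 K t ^ 2 - t s`, where `K = n p̄`
  exact (toMeasure_not_le_lap_sub_expLap_le_exp h.1 (fun _ _ => h.nonneg hq hqp.le)
    (fun _ _ hvw => (hle hvw).trans hp1) hμ (expLap_le h.1 (fun _ _ => hle) hpbar.le)
    (t := s / (4 * (n * pbar))) (by positivity) s).trans (ENNReal.ofReal_le_ofReal
      (mul_exp_le_of_three_mul_sqrt_le hn' hδ (by positivity) hlog hs))

theorem NSSBMprob.le_eig_lap_two_sub_eig_expLap_one {G : SimpleGraph (Fin n)}
    (h : NSSBMprob n p pbar q P) (hn : Even n) (hn2 : 2 < n) (hq : 0 ≤ q)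
    (hG : -(n * (p - q) / 4) • 1 ≤ lap G - expLap P) :
    n * (p - q) / 4 ≤ eig (lap G) 2 - eig (expLap P) 1 := by
  have hlap := h.le_eig_lap_two hn hn2 hG
  have hexp := h.eig_expLap_one_le (by omega) hq
  linarith

theorem two_lt_of_even_of_mul_log_le (hn : Even n) (hn0 : 0 < n)
    (h : 12 * Real.log n ≤ n) : 2 < n := by
  obtain ⟨m, rfl⟩ := hn
  by_contra! hle
  obtain rfl : m = 1 := by omega
  norm_num at h
  linarith [Real.log_two_gt_d9]

theorem lambda3_minus_lambda2star_general (hn : Even n) (hn0 : 0 < n) (hq : 0 ≤ q) (hqp : q < p)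
    (hpp : p ≤ pbar) (hp1 : pbar ≤ 1) (hδ : 0 < δ) (hP : NSSBMprob n p pbar q P)
    (hμ : IsEdgeProduct P μ)
    (hgap : 12 * (√(n * pbar * Real.log (n / δ)) + Real.log (n / δ)) ≤ n * (p - q)) :
    1 - ENNReal.ofReal δ ≤
      μ.toMeasure {G | n * (p - q) / 4 ≤ eig (lap G) 2 - eig (expLap P) 1} := by
  rcases le_or_gt 1 δ with hδ1 | hδ1
  · simp [tsub_eq_zero_of_le (ENNReal.one_le_ofReal.2 hδ1)]
  have hn' : (0 : ℝ) < n := Nat.cast_pos.2 hn0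
  have hlog : Real.log n ≤ Real.log (n / δ) :=
    Real.log_le_log hn' (le_div_self hn'.le hδ hδ1.le)
  have hlog0 : 0 ≤ Real.log (n / δ) := (Real.log_natCast_nonneg n).trans hlog
  have hsqrt := Real.sqrt_nonneg (n * pbar * Real.log (n / δ))
  have hn2 : 2 < n := two_lt_of_even_of_mul_log_le hn hn0 (by nlinarith)
  set s := n * (p - q) / 4 with hs
  set B := {G : SimpleGraph (Fin n) | ¬ -s • (1 : Matrix (Fin n) (Fin n) ℝ) ≤ lap G - expLap P}
  have hB : μ.toMeasure B ≤ ENNReal.ofReal δ :=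
    hP.toMeasure_not_le_lap_sub_expLap_le hμ hn0 hq hqp hpp hp1 hδ hlog0 (by linarith)
  calc 1 - ENNReal.ofReal δ ≤ 1 - μ.toMeasure B := tsub_le_tsub_left hB 1
    _ = μ.toMeasure Bᶜ := (prob_compl_eq_one_sub MeasurableSpace.measurableSet_top).symm
    _ ≤ _ := measure_mono fun G hG =>
      hP.le_eig_lap_two_sub_eig_expLap_one hn hn2 hq (not_not.1 hG)

end Gap

/-- **Lemma (eigenvalue gap `λ₃(L) - λ₂(L⋆)`).**
In the NSSBM setting, there is a universal constant `C > 0` such that if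
`n(p-q) ≥ C(√(n p̄ log(n/δ)) + log(n/δ))`, then for any `δ ≥ n⁻¹⁰`, with probability at
least `1 - δ`, `λ₃(L) - λ₂(L⋆) ≥ n(p-q)/4`, where `L⋆ = E[L]`. -/
theorem lambda3_minus_lambda2star :
    ∃ C : ℝ, 0 < C ∧ ∀ n : ℕ, Even n →
      ∀ p pbar q δ : ℝ, 0 ≤ q → q < p → p ≤ pbar → pbar ≤ 1 → 1 / (n : ℝ) ^ 10 ≤ δ →
      ∀ (P : Fin n → Fin n → ℝ) (μ : PMF (SimpleGraph (Fin n))),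
        NSSBMprob n p pbar q P → IsEdgeProduct P μ →
        C * (Real.sqrt ((n : ℝ) * pbar * Real.log (n / δ)) + Real.log (n / δ)) ≤
          (n : ℝ) * (p - q) →
        1 - ENNReal.ofReal δ ≤ μ.toMeasure {G |
          (n : ℝ) * (p - q) / 4 ≤ eig (lap G) 2 - eig (expLap P) 1} := by
  refine ⟨12, by norm_num, fun n hn p pbar q δ hq hqp hpp hp1 hδ P μ hP hμ hgap => ?_⟩
  rcases n.eq_zero_or_pos with rfl | hn0
  · simp [eig]
  · exact lambda3_minus_lambda2star_general hn hn0 hq hqp hpp hp1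
      (lt_of_lt_of_le (by positivity) hδ) hP hμ hgap

end
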